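/- Let n ≥ 3, f ∈ C_c^∞(ℝ^n), and β a multi-index with |β| = k ≥ 2. Then the principal value p.v. ∫_{ℝ^n} D^β Γ(x−y) f(y) dy := lim_{ε→0} ∫_{ℝ^n \ B_ε(x)} D^β Γ(x−y) f(y) dy exists for every x ∈ ℝ^n, and if supp f ⊂ B_R, it equals ∫_{B_R} D^β Γ(x−y)(f(y) − T^x_{k−2}(f)(y)) dy, where T^x_{k−2}(f) is the Taylor polynomial of f of order k−2 centered at x. -/

import Mathlib

open MeasureTheory Metric

noncomputable section

def sphArea (n : ℕ) : ℝ :=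
  (μH[(n : ℝ) - 1] (sphere (0 : EuclideanSpace ℝ (Fin n)) 1)).toReal

def fundSol (n : ℕ) (x : EuclideanSpace ℝ (Fin n)) : ℝ :=
  (1 / (n * (2 - (n : ℝ)) * sphArea n)) * ‖x‖ ^ ((2 : ℝ) - n)

def ee {n : ℕ} (i : Fin n) : EuclideanSpace ℝ (Fin n) := EuclideanSpace.single i 1

/-- The Taylor polynomial of order `k` of `f` at `x`, evaluated at `y`. -/
def taylorPoly (n k : ℕ) (f : EuclideanSpace ℝ (Fin n) → ℝ)
    (x y : EuclideanSpace ℝ (Fin n)) : ℝ :=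
  ∑ i ∈ Finset.range (k + 1),
    ((Nat.factorial i : ℝ)⁻¹) * iteratedFDeriv ℝ i f x (fun _ => y - x)

section aux

set_option linter.unusedSectionVars false

open Set Filter Topology Module
open scoped ContDiff

variable {E : Type*} [NormedAddCommGroup E] [InnerProductSpace ℝ E] [FiniteDimensional ℝ E]
  [MeasurableSpace E] [BorelSpace E] [Nontrivial E]

/-- Integration in polar coordinates. -/
lemma polar_integral (F : E → ℝ) (hF : Integrable F (volume : Measure E)) :
    ∫ z, F z = ∫ θ : sphere (0 : E) 1, (∫ r in Ioi (0 : ℝ),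
      r ^ (finrank ℝ E - 1) * F (r • (θ : E))) ∂(volume : Measure E).toSphere := by
  have hmp := (volume : Measure E).measurePreserving_homeomorphUnitSphereProd
  have hme := Homeomorph.measurableEmbedding (homeomorphUnitSphereProd E)
  let G : sphere (0 : E) 1 × Ioi (0 : ℝ) → ℝ := fun p => F (p.2.1 • p.1.1)
  have hG : ∀ x : ({0}ᶜ : Set E), G (homeomorphUnitSphereProd E x) = F x := by
    intro x
    have hx : (x : E) ≠ 0 := x.2
    simp [G, smul_smul, hx]
  have hi : Integrable G
      ((volume : Measure E).toSphere.prod (Measure.volumeIoiPow (finrank ℝ E - 1))) := by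
    rw [← hmp.integrable_comp_emb hme]
    have : (G ∘ homeomorphUnitSphereProd E) = F ∘ Subtype.val := funext hG
    rw [this]
    exact (integrableOn_iff_comap_subtypeVal (by measurability)).1 hF.integrableOn
  calc ∫ z, F z = ∫ x : ({(0)}ᶜ : Set E), F x.1 ∂(Measure.comap Subtype.val volume) := by
        rw [integral_subtype_comap (measurableSet_singleton _).compl fun x ↦ F x,
          restrict_compl_singleton]
    _ = ∫ p, G p ∂(volume : Measure E).toSphere.prod (.volumeIoiPow (finrank ℝ E - 1)) := by
      rw [← hmp.integral_comp hme]
      simp only [hG]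
    _ = _ := by
      rw [integral_prod _ hi]
      congr 1
      ext θ
      simp only [Measure.volumeIoiPow, ENNReal.ofReal, G]
      rw [integral_withDensity_eq_integral_smul,
        integral_subtype_comap measurableSet_Ioi
          fun a : ℝ ↦ Real.toNNReal (a ^ (finrank ℝ E - 1)) • F (a • (θ : E)),
        setIntegral_congr_fun measurableSet_Ioi fun x hx ↦ ?_]
      · rw [NNReal.smul_def, Real.coe_toNNReal _ (pow_nonneg hx.out.le _)]; rfl
      · exact (measurable_subtype_coe.pow_const _).real_toNNReal

/-- The integral of a directional derivative of a compactly supported `C^1` function vanishes. -/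
lemma integral_fderiv_zero (h : E → ℝ) (hh : ContDiff ℝ 1 h) (hc : HasCompactSupport h) (e : E) :
    ∫ z, fderiv ℝ h z e = 0 := by
  have hd : Integrable (fun x => fderiv ℝ h x e) (volume : Measure E) := by
    refine Continuous.integrable_of_hasCompactSupport ?_ ?_
    · exact (hh.continuous_fderiv (by norm_num)).clm_apply continuous_const
    · exact hc.fderiv_apply ℝ e
  have := integral_mul_fderiv_eq_neg_fderiv_mul_of_integrable (μ := (volume : Measure E))
    (f := fun _ : E => (1 : ℝ)) (g := h) (v := e) (by simp) (by simpa using hd)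
    (by simpa using hh.continuous.integrable_of_hasCompactSupport hc)
    (by intro x _; fun_prop) (fun x _ => (hh.differentiable (by norm_num)) x)
  simpa using this

/-- Flux lemma: the derivative of a function homogeneous of degree `1-n` has mean zero on the
unit sphere. -/
lemma flux (g : E → ℝ) (hg : ∀ z ≠ 0, ContDiffAt ℝ ∞ g z)
    (hom : ∀ t : ℝ, 0 < t → ∀ z, z ≠ 0 → g (t • z) = t ^ (1 - (finrank ℝ E : ℤ)) * g z) (e : E) :
    ∫ θ : sphere (0 : E) 1, fderiv ℝ g θ e ∂(volume : Measure E).toSphere = 0 := by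
  let φ : ContDiffBump (2 : ℝ) := ⟨1 / 2, 1, by norm_num, by norm_num⟩
  have hφs : ContDiff ℝ ∞ φ := φ.contDiff
  have hφ0 : ∀ r : ℝ, r < 1 → φ r = 0 := by
    intro r hr
    apply φ.zero_of_le_dist
    rw [Real.dist_eq, abs_of_nonpos] <;> simp [φ] <;> linarith
  have hφ3 : ∀ r : ℝ, 3 < r → φ r = 0 := by
    intro r hr
    apply φ.zero_of_le_dist
    rw [Real.dist_eq, abs_of_nonneg] <;> simp [φ] <;> linarith
  have hn : 0 < finrank ℝ E := finrank_pos
  have hχs : HasCompactSupport (fun r => φ r * r⁻¹) := φ.hasCompactSupport.mul_right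
  have hχc : Continuous (fun r => φ r * r⁻¹) := by
    rw [continuous_iff_continuousAt]
    intro r
    by_cases hr : r = 0
    · have : (fun r => φ r * r⁻¹) =ᶠ[𝓝 r] fun _ => 0 := by
        have : Iio (1 : ℝ) ∈ 𝓝 r := by rw [hr]; exact Iio_mem_nhds one_pos
        filter_upwards [this] with w hw
        simp [hφ0 w hw]
      exact continuousAt_const.congr this.symm
    · exact φ.continuous.continuousAt.mul (continuousAt_inv₀ hr)
  let h : E → ℝ := fun z => φ ‖z‖ * g z
  have hsm : ContDiff ℝ 1 h := by
    rw [contDiff_iff_contDiffAt]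
    intro z
    by_cases hz : z = 0
    · have : h =ᶠ[𝓝 z] fun _ => 0 := by
        have : ball (0 : E) 1 ∈ 𝓝 z := by rw [hz]; exact ball_mem_nhds _ one_pos
        filter_upwards [this] with w hw
        simp [h, hφ0 ‖w‖ (by simpa using hw)]
      exact contDiffAt_const.congr_of_eventuallyEq this
    · refine ContDiffAt.mul ?_ ((hg z hz).of_le (by exact_mod_cast le_top))
      exact (hφs.of_le (by exact_mod_cast le_top)).contDiffAt.comp z (contDiffAt_norm ℝ hz)
  have hcs : HasCompactSupport h := by
    refine HasCompactSupport.intro (isCompact_closedBall (0 : E) 3) ?_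
    intro z hz
    simp [h, hφ3 ‖z‖ (by simpa using hz)]
  have key := integral_fderiv_zero h hsm hcs e
  have hd : Integrable (fun x => fderiv ℝ h x e) (volume : Measure E) := by
    refine Continuous.integrable_of_hasCompactSupport ?_ ?_
    · exact (hsm.continuous_fderiv (by norm_num)).clm_apply continuous_const
    · exact hcs.fderiv_apply ℝ e
  rw [polar_integral _ hd] at key
  -- homogeneity of the derivative
  have homd : ∀ r : ℝ, 0 < r → ∀ z : E, z ≠ 0 →
      fderiv ℝ g (r • z) e = r ^ (-(finrank ℝ E : ℤ)) * fderiv ℝ g z e := by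
    intro r hr z hz
    have h1 : (fun w => g (r • w)) =ᶠ[𝓝 z] fun w => r ^ (1 - (finrank ℝ E : ℤ)) * g w := by
      filter_upwards [isOpen_ne.mem_nhds hz] with w hw using hom r hr w hw
    have h2 := h1.fderiv_eq (𝕜 := ℝ)
    rw [fderiv_comp_smul, fderiv_const_mul ((hg z hz).differentiableAt (by simp))] at h2
    have h3 := congrArg (fun A => A e) h2
    simp only [smul_apply, smul_eq_mul] at h3
    have : r ^ (1 - (finrank ℝ E : ℤ)) = r * r ^ (-(finrank ℝ E : ℤ)) := by
      rw [sub_eq_add_neg, zpow_add₀ hr.ne', zpow_one]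
    rw [this, mul_assoc] at h3
    exact mul_left_cancel₀ hr.ne' h3
  have inner : ∀ θ : sphere (0 : E) 1, (∫ r in Ioi (0 : ℝ),
      r ^ (finrank ℝ E - 1) * fderiv ℝ h (r • (θ : E)) e) =
      (∫ r in Ioi (0 : ℝ), φ r * r⁻¹) * fderiv ℝ g θ e := by
    intro θ
    have hθ : ‖(θ : E)‖ = 1 := by simp
    have hθ0 : (θ : E) ≠ 0 := by
      intro h0; rw [h0] at hθ; simp at hθ
    have hpt : ∀ r ∈ Ioi (0 : ℝ), r ^ (finrank ℝ E - 1) * fderiv ℝ h (r • (θ : E)) e =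
        (φ r * r⁻¹) * fderiv ℝ g θ e + deriv φ r * (g θ * inner ℝ (θ : E) e) := by
      intro r hr
      have hr : 0 < r := hr
      have hz : r • (θ : E) ≠ 0 := smul_ne_zero hr.ne' hθ0
      have hnorm : HasFDerivAt (fun w : E => ‖w‖) (fderiv ℝ (fun w : E => ‖w‖) (r • (θ : E)))
          (r • (θ : E)) :=
        ((contDiffAt_norm ℝ (n := 1) hz).differentiableAt (by norm_num)).hasFDerivAt
      have hnv : fderiv ℝ (fun w : E => ‖w‖) (r • (θ : E)) e = inner ℝ (θ : E) e := by
        have h6 := (hasStrictFDerivAt_norm_sq (r • (θ : E))).hasFDerivAt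
        have h7 := h6.unique (hnorm.pow 2)
        have h8 := congrArg (fun A => A e) h7
        simp [norm_smul, hθ, abs_of_pos hr] at h8
        have h9 : r * (2 * inner ℝ (θ : E) e) =
            r * (2 * fderiv ℝ (fun w : E => ‖w‖) (r • (θ : E)) e) := by linarith
        linarith [mul_left_cancel₀ hr.ne' h9]
      have hφd : HasDerivAt φ (deriv φ r) ‖r • (θ : E)‖ := by
        rw [norm_smul, hθ, Real.norm_of_nonneg hr.le, mul_one]
        exact (hφs.differentiable (by simp) r).hasDerivAt
      have hgd := ((hg _ hz).differentiableAt (by simp)).hasFDerivAt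
      have := ((hφd.comp_hasFDerivAt _ hnorm).mul hgd).fderiv
      have h4 : fderiv ℝ h (r • (θ : E)) e = φ r * fderiv ℝ g (r • (θ : E)) e +
          g (r • (θ : E)) * (deriv φ r * inner ℝ (θ : E) e) := by
        have h5 := congrArg (fun A => A e) this
        simp only [add_apply, smul_apply, smul_eq_mul,
          hnv, Function.comp, norm_smul, hθ, Real.norm_of_nonneg hr.le, mul_one] at h5
        exact h5
      rw [h4, homd r hr _ hθ0, hom r hr _ hθ0]
      have e1 : r ^ (finrank ℝ E - 1) * r ^ (-(finrank ℝ E : ℤ)) = r⁻¹ := by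
        rw [← zpow_natCast, ← zpow_add₀ hr.ne', ← zpow_neg_one]; congr 1; omega
      have e2 : r ^ (finrank ℝ E - 1) * r ^ (1-(finrank ℝ E : ℤ)) = 1 := by
        rw [← zpow_natCast, ← zpow_add₀ hr.ne', ← zpow_zero r]; congr 1; omega
      linear_combination (φ r * fderiv ℝ g θ e) * e1 + (g θ * deriv φ r * inner ℝ (θ : E) e) * e2
    have hcφ : HasCompactSupport φ := φ.hasCompactSupport
    have hi2 : Integrable (deriv φ) := by
      refine Continuous.integrable_of_hasCompactSupport ?_ hcφ.deriv
      exact hφs.continuous_deriv (by simp)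
    have hi1 : IntegrableOn (fun r => φ r * r⁻¹) (Ioi (0 : ℝ)) :=
      (hχc.integrable_of_hasCompactSupport hχs).integrableOn
    rw [setIntegral_congr_fun measurableSet_Ioi hpt, integral_add, integral_mul_const,
      integral_mul_const]
    · have : ∫ r in Ioi (0 : ℝ), deriv φ r = 0 := by
        have := integral_Ioi_of_hasDerivAt_of_tendsto (f := φ) (f' := deriv φ) (a := 0) (m := 0)
          φ.continuous.continuousWithinAt
          (fun x _ => (hφs.differentiable (by simp) x).hasDerivAt) hi2.integrableOn
          (by
            refine tendsto_const_nhds.congr' ?_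
            filter_upwards [eventually_gt_atTop 3] with r hr
            exact (hφ3 r hr).symm)
        rw [this, hφ0 0 one_pos, sub_zero]
      rw [this]; ring
    · exact hi1.mul_const _
    · exact hi2.integrableOn.mul_const _
  simp only [inner] at key
  rw [integral_const_mul] at key
  refine (mul_eq_zero.1 key).resolve_left ?_
  rw [setIntegral_eq_integral_of_forall_compl_eq_zero]
  · refine (hχc.integral_pos_of_hasCompactSupport_nonneg_nonzero hχs (x := 2) ?_ ?_).ne'
    · intro r
      rcases lt_or_ge r 1 with hr | hr
      · simp [hφ0 r hr]
      · exact mul_nonneg φ.nonneg (inv_nonneg.2 (by linarith))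
    · have : φ 2 = 1 := φ.one_of_mem_closedBall (by simp [φ])
      simp [this]
  · intro r hr
    simp only [mem_Ioi, not_lt] at hr
    simp [hφ0 r (by linarith)]


/-- Smooth functions on the whole space, homogeneous of degree `j`. -/
def HomN (j : ℕ) (q : E → ℝ) : Prop :=
  ContDiff ℝ ∞ q ∧ ∀ (t : ℝ) (z : E), q (t • z) = t ^ j * q z

lemma HomN.mul {i j : ℕ} {p q : E → ℝ} (hp : HomN i p) (hq : HomN j q) :
    HomN (i + j) (fun z => p z * q z) :=
  ⟨hp.1.mul hq.1, fun t z => by beta_reduce; rw [hp.2, hq.2]; ring⟩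

lemma HomN.add {j : ℕ} {p q : E → ℝ} (hp : HomN j p) (hq : HomN j q) :
    HomN j (fun z => p z + q z) :=
  ⟨hp.1.add hq.1, fun t z => by beta_reduce; rw [hp.2, hq.2]; ring⟩

lemma HomN.const_mul {j : ℕ} {p : E → ℝ} (hp : HomN j p) (c : ℝ) :
    HomN j (fun z => c * p z) :=
  ⟨contDiff_const.mul hp.1, fun t z => by beta_reduce; rw [hp.2]; ring⟩

lemma HomN.const (c : ℝ) : HomN 0 (fun _ : E => c) :=
  ⟨contDiff_const, fun t z => by simp⟩

lemma HomN.inner (a : E) : HomN 1 (fun z : E => inner ℝ a z) :=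
  ⟨contDiff_const.inner ℝ contDiff_id, fun t z => by beta_reduce; rw [inner_smul_right]; simp⟩

lemma HomN.normSq : HomN 2 (fun z : E => ‖z‖ ^ 2) :=
  ⟨contDiff_norm_sq ℝ, fun t z => by beta_reduce; rw [norm_smul, mul_pow]; simp⟩

lemma HomN.comp_neg {j : ℕ} {p : E → ℝ} (hp : HomN j p) : HomN j (fun z => p (-z)) :=
  ⟨hp.1.comp contDiff_neg, fun t z => by beta_reduce; rw [← smul_neg, hp.2]⟩

lemma HomN.fderiv {j : ℕ} {q : E → ℝ} (hq : HomN (j + 1) q) (e : E) :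
    HomN j (fun z => fderiv ℝ q z e) := by
  refine ⟨(hq.1.fderiv_right (m := ∞) (by simp)).clm_apply contDiff_const, fun t z => ?_⟩
  have main : ∀ t : ℝ, t ≠ 0 → ∀ z, _root_.fderiv ℝ q (t • z) e = t ^ j * _root_.fderiv ℝ q z e := by
    intro t ht z
    have h1 : (fun w => q (t • w)) = fun w => t ^ (j + 1) * q w := funext (hq.2 t)
    have h2 := congrArg (fun F => _root_.fderiv ℝ F z e) h1
    simp only [fderiv_comp_smul] at h2
    rw [fderiv_const_mul (hq.1.differentiable (by simp) z)] at h2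
    simp only [smul_apply, smul_eq_mul] at h2
    rw [pow_succ', mul_assoc] at h2
    exact mul_left_cancel₀ ht h2
  have hcont : Continuous (fun z => _root_.fderiv ℝ q z e) :=
    (hq.1.continuous_fderiv (by simp)).clm_apply continuous_const
  have hc1 : Continuous (fun s : ℝ => _root_.fderiv ℝ q (s • z) e) :=
    hcont.comp (continuous_id.smul continuous_const)
  have hc2 : Continuous (fun s : ℝ => s ^ j * _root_.fderiv ℝ q z e) := by fun_prop
  have := hc1.ext_on (dense_compl_singleton (0 : ℝ)) hc2 (fun s hs => main s hs z)
  exact congrFun this t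

lemma HomN.zero_const {q : E → ℝ} (hq : HomN 0 q) (z : E) : q z = q 0 := by
  have := hq.2 0 z
  simpa using this.symm

section kernel

variable {Γ : E → ℝ} (hΓ : ∀ z ≠ 0, ContDiffAt ℝ ∞ Γ z)
  (hΓh : ∀ s : ℝ, s ≠ 0 → ∀ z, Γ (s • z) = |s| ^ (2 - (finrank ℝ E : ℤ)) * Γ z)

lemma K_smooth (hΓ : ∀ z ≠ 0, ContDiffAt ℝ ∞ Γ z) (k : ℕ) (m : Fin k → E) (z : E) (hz : z ≠ 0) :
    ContDiffAt ℝ ∞ (fun z => iteratedFDeriv ℝ k Γ z m) z := by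
  have h1 : ContDiffAt ℝ ∞ (iteratedFDeriv ℝ k Γ) z :=
    (hΓ z hz).iteratedFDeriv_right le_rfl
  exact (ContinuousMultilinearMap.apply ℝ (fun _ : Fin k => E) ℝ m).contDiff.contDiffAt.comp z h1

lemma K_succ (hΓ : ∀ z ≠ 0, ContDiffAt ℝ ∞ Γ z) (k : ℕ) (m : Fin (k + 1) → E) (z : E)
    (hz : z ≠ 0) :
    iteratedFDeriv ℝ (k + 1) Γ z m =
      fderiv ℝ (fun z => iteratedFDeriv ℝ k Γ z (Fin.tail m)) z (m 0) := by
  have h1 : ContDiffAt ℝ ∞ (iteratedFDeriv ℝ k Γ) z :=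
    (hΓ z hz).iteratedFDeriv_right le_rfl
  have h2 := (h1.differentiableAt (by simp)).hasFDerivAt
  have h3 := ((ContinuousMultilinearMap.apply ℝ (fun _ : Fin k => E) ℝ
    (Fin.tail m)).hasFDerivAt (x := iteratedFDeriv ℝ k Γ z)).comp z h2
  rw [iteratedFDeriv_succ_apply_left]
  exact (congrArg (fun A => A (m 0)) h3.fderiv).symm

lemma K_hom (hΓ : ∀ z ≠ 0, ContDiffAt ℝ ∞ Γ z)
    (hΓh : ∀ s : ℝ, s ≠ 0 → ∀ z, Γ (s • z) = |s| ^ (2 - (finrank ℝ E : ℤ)) * Γ z)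
    (k : ℕ) (m : Fin k → E) (s : ℝ) (hs : s ≠ 0) (z : E) (hz : z ≠ 0) :
    s ^ k * iteratedFDeriv ℝ k Γ (s • z) m =
      |s| ^ (2 - (finrank ℝ E : ℤ)) * iteratedFDeriv ℝ k Γ z m := by
  induction k generalizing z with
  | zero => simpa using hΓh s hs z
  | succ k ih =>
    rw [K_succ hΓ k m _ (smul_ne_zero hs hz), K_succ hΓ k m z hz]
    have h1 : (fun w => s ^ k * iteratedFDeriv ℝ k Γ (s • w) (Fin.tail m)) =ᶠ[𝓝 z]
        fun w => |s| ^ (2 - (finrank ℝ E : ℤ)) * iteratedFDeriv ℝ k Γ w (Fin.tail m) := by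
      filter_upwards [isOpen_ne.mem_nhds hz] with w hw using ih _ w hw
    have h2 := congrArg (fun A => A (m 0)) (h1.fderiv_eq (𝕜 := ℝ))
    have hd := (K_smooth hΓ k (Fin.tail m) z hz).differentiableAt (by simp)
    have hd2 := (K_smooth hΓ k (Fin.tail m) (s • z) (smul_ne_zero hs hz)).differentiableAt (by simp)
    have hd3 : DifferentiableAt ℝ (fun w => iteratedFDeriv ℝ k Γ (s • w) (Fin.tail m)) z := by
      refine DifferentiableAt.comp z (g := fun w => iteratedFDeriv ℝ k Γ w (Fin.tail m))
        (f := fun w => s • w) hd2 (by fun_prop)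
    rw [fderiv_const_mul hd, fderiv_const_mul hd3,
      fderiv_comp_smul (f := fun w => iteratedFDeriv ℝ k Γ w (Fin.tail m))] at h2
    simp only [smul_apply, smul_eq_mul] at h2
    rw [← h2]; ring

lemma K_pos_hom (hΓ : ∀ z ≠ 0, ContDiffAt ℝ ∞ Γ z)
    (hΓh : ∀ s : ℝ, s ≠ 0 → ∀ z, Γ (s • z) = |s| ^ (2 - (finrank ℝ E : ℤ)) * Γ z)
    (k : ℕ) (m : Fin k → E) (s : ℝ) (hs : 0 < s) (z : E) (hz : z ≠ 0) :
    iteratedFDeriv ℝ k Γ (s • z) m =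
      s ^ (2 - (finrank ℝ E : ℤ) - k) * iteratedFDeriv ℝ k Γ z m := by
  have h := K_hom hΓ hΓh k m s hs.ne' z hz
  rw [abs_of_pos hs] at h
  rw [zpow_sub₀ hs.ne', zpow_natCast, div_mul_eq_mul_div, eq_div_iff (pow_pos hs k).ne', ← h]
  ring

lemma K_neg (hΓ : ∀ z ≠ 0, ContDiffAt ℝ ∞ Γ z)
    (hΓh : ∀ s : ℝ, s ≠ 0 → ∀ z, Γ (s • z) = |s| ^ (2 - (finrank ℝ E : ℤ)) * Γ z)
    (k : ℕ) (m : Fin k → E) (z : E) (hz : z ≠ 0) :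
    iteratedFDeriv ℝ k Γ (-z) m = (-1) ^ k * iteratedFDeriv ℝ k Γ z m := by
  have h := K_hom hΓ hΓh k m (-1) (by norm_num) z hz
  simp only [abs_neg, abs_one, one_zpow, one_mul, neg_smul, one_smul] at h
  rw [← h, ← mul_assoc, ← mul_pow]; simp

lemma sphere_ne_zero (θ : sphere (0 : E) 1) : (θ : E) ≠ 0 := by
  intro h0
  have hθ : ‖(θ : E)‖ = 1 := by simp
  rw [h0] at hθ; simp at hθ

lemma sphere_integrable (g : E → ℝ) (hg : ∀ z ≠ 0, ContDiffAt ℝ ∞ g z) :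
    Integrable (fun θ : sphere (0 : E) 1 => g θ) (volume : Measure E).toSphere := by
  have : Continuous (fun θ : sphere (0 : E) 1 => g θ) := by
    rw [continuous_iff_continuousAt]
    intro θ
    exact (hg θ (sphere_ne_zero θ)).continuousAt.comp continuous_subtype_val.continuousAt
  exact this.integrable_of_hasCompactSupport (HasCompactSupport.of_compactSpace _)

lemma sphere_orth (hΓ : ∀ z ≠ 0, ContDiffAt ℝ ∞ Γ z)
    (hΓh : ∀ s : ℝ, s ≠ 0 → ∀ z, Γ (s • z) = |s| ^ (2 - (finrank ℝ E : ℤ)) * Γ z)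
    (l : ℕ) (m : Fin (l + 2) → E) (q : E → ℝ) (hq : HomN l q) :
    ∫ θ : sphere (0 : E) 1, iteratedFDeriv ℝ (l + 2) Γ θ m * q θ
      ∂(volume : Measure E).toSphere = 0 := by
  induction l generalizing q with
  | zero =>
    have hsm : ∀ z ≠ 0, ContDiffAt ℝ ∞
        (fun z => iteratedFDeriv ℝ (0 + 1) Γ z (Fin.tail m)) z := K_smooth hΓ _ _
    have hfl := flux (fun z => iteratedFDeriv ℝ (0 + 1) Γ z (Fin.tail m)) hsm
      (fun t ht z hz => by
        rw [K_pos_hom hΓ hΓh _ _ t ht z hz]; congr 2; push_cast; ring) (m 0)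
    have : ∀ θ : sphere (0 : E) 1, iteratedFDeriv ℝ (0 + 2) Γ θ m * q θ =
        fderiv ℝ (fun z => iteratedFDeriv ℝ (0 + 1) Γ z (Fin.tail m)) θ (m 0) * q 0 := by
      intro θ
      rw [hq.zero_const, K_succ hΓ (0 + 1) m θ (sphere_ne_zero θ)]
    simp only [this]
    rw [integral_mul_const, hfl, zero_mul]
  | succ l ih =>
    have hsm : ∀ z ≠ 0, ContDiffAt ℝ ∞
        (fun z => iteratedFDeriv ℝ (l + 2) Γ z (Fin.tail m)) z := K_smooth hΓ _ _
    have hfl := flux (fun z => iteratedFDeriv ℝ (l + 2) Γ z (Fin.tail m) * q z)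
      (fun z hz => (hsm z hz).mul hq.1.contDiffAt)
      (fun t ht z hz => by
        rw [K_pos_hom hΓ hΓh _ _ t ht z hz, hq.2]
        have : t ^ (1 - (finrank ℝ E : ℤ)) =
            t ^ (2 - (finrank ℝ E : ℤ) - ((l + 2 : ℕ) : ℤ)) * t ^ (l + 1) := by
          rw [← zpow_natCast, ← zpow_add₀ ht.ne']; congr 1; push_cast; ring
        rw [this]; ring) (m 0)
    have hpt : ∀ θ : sphere (0 : E) 1,
        fderiv ℝ (fun z => iteratedFDeriv ℝ (l + 2) Γ z (Fin.tail m) * q z) θ (m 0) =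
        iteratedFDeriv ℝ (l + 1 + 2) Γ θ m * q θ +
        iteratedFDeriv ℝ (l + 2) Γ θ (Fin.tail m) * fderiv ℝ q θ (m 0) := by
      intro θ
      have h0 := sphere_ne_zero θ
      rw [fderiv_fun_mul ((hsm θ h0).differentiableAt (by simp)) (hq.1.differentiable (by simp) _),
        K_succ hΓ (l + 2) m θ h0]
      simp only [add_apply, smul_apply, smul_eq_mul]
      ring
    simp only [hpt] at hfl
    have hi := ih (Fin.tail m) _ (hq.fderiv (m 0))
    rw [integral_add, hi, add_zero] at hfl
    · exact hfl
    · exact sphere_integrable (fun z => iteratedFDeriv ℝ (l + 1 + 2) Γ z m * q z)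
        (fun z hz => (K_smooth hΓ _ _ z hz).mul hq.1.contDiffAt)
    · exact sphere_integrable (fun z => iteratedFDeriv ℝ (l + 2) Γ z (Fin.tail m) *
        fderiv ℝ q z (m 0))
        (fun z hz => (K_smooth hΓ _ _ z hz).mul (hq.fderiv (m 0)).1.contDiffAt)

/-- Distance from the origin to the boundary of a ball, in a given direction. -/
def rho (c t : ℝ) : ℝ := t + Real.sqrt (t ^ 2 + c)

lemma rho_pos {c : ℝ} (hc : 0 < c) (t : ℝ) : 0 < rho c t := by
  have h1 : |t| < Real.sqrt (t ^ 2 + c) := by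
    rw [← Real.sqrt_sq_eq_abs]
    exact Real.sqrt_lt_sqrt (sq_nonneg t) (by linarith)
  have := neg_abs_le t
  unfold rho; linarith

lemma rho_mul {c : ℝ} (hc : 0 < c) (t : ℝ) : rho c t * rho c (-t) = c := by
  have h := Real.sq_sqrt (show 0 ≤ t ^ 2 + c by positivity)
  unfold rho
  rw [neg_sq]
  linear_combination h

lemma rho_sub (c t : ℝ) : rho c t - rho c (-t) = 2 * t := by
  unfold rho
  rw [neg_sq]; ring

lemma mem_ball_iff_rho (a u : E) (R r : ℝ) (ha : ‖a‖ < R) (hu : ‖u‖ = 1) (hr : 0 < r) :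
    r • u ∈ ball a R ↔ r < rho (R ^ 2 - ‖a‖ ^ 2) (inner ℝ a u) := by
  have ha0 := norm_nonneg a
  have hc : 0 < R ^ 2 - ‖a‖ ^ 2 := by nlinarith
  set t := inner ℝ a u
  set c := R ^ 2 - ‖a‖ ^ 2 with hcdef
  have h1 : ‖r • u - a‖ ^ 2 = r ^ 2 - 2 * (r * t) + ‖a‖ ^ 2 := by
    rw [norm_sub_sq_real, norm_smul, hu, inner_smul_left, real_inner_comm]
    simp [t]
  have h2 : (r - rho c t) * (r + rho c (-t)) = ‖r • u - a‖ ^ 2 - R ^ 2 := by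
    rw [h1]
    linear_combination (- r) * rho_sub c t - rho_mul hc t - hcdef
  have hp := rho_pos hc (-t)
  rw [mem_ball, dist_eq_norm]
  constructor
  · intro h
    have : ‖r • u - a‖ ^ 2 < R ^ 2 := by
      have := norm_nonneg (r • u - a); nlinarith
    by_contra hcon
    push Not at hcon
    have : 0 ≤ (r - rho c t) * (r + rho c (-t)) := mul_nonneg (by linarith) (by linarith)
    linarith
  · intro h
    have : (r - rho c t) * (r + rho c (-t)) < 0 := mul_neg_of_neg_of_pos (by linarith) (by linarith)
    exact lt_of_pow_lt_pow_left₀ 2 (by linarith) (by linarith)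

lemma exists_Q (a : E) {c : ℝ} (hc : 0 < c) (m : ℕ) : ∃ Q : E → ℝ, HomN m Q ∧
    ∀ u : E, ‖u‖ = 1 → Q u =
      ((rho c (inner ℝ a u))⁻¹) ^ m + (-(rho c (-inner ℝ a u))⁻¹) ^ m := by
  have hsum : ∀ t : ℝ, (rho c t)⁻¹ - (rho c (-t))⁻¹ = - 2 * t / c := by
    intro t
    have h1 := rho_pos hc t
    have h2 := rho_pos hc (-t)
    rw [inv_sub_inv h1.ne' h2.ne', rho_mul hc]
    congr 1; linarith [rho_sub c t]
  have hprod : ∀ t : ℝ, (rho c t)⁻¹ * (rho c (-t))⁻¹ = c⁻¹ := by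
    intro t
    rw [← mul_inv, rho_mul hc]
  induction m using Nat.twoStepInduction with
  | zero => exact ⟨fun _ => 2, HomN.const 2, fun u _ => by norm_num⟩
  | one =>
    refine ⟨fun z => (-2 / c) * inner ℝ a z, (HomN.inner a).const_mul _, fun u _ => ?_⟩
    have := hsum (inner ℝ a u)
    simp only [pow_one]
    rw [← sub_eq_add_neg, this]; ring
  | more m ih1 ih2 =>
    obtain ⟨Q1, h1, e1⟩ := ih1
    obtain ⟨Q2, h2, e2⟩ := ih2
    refine ⟨fun z => (-2 / c) * (inner ℝ a z * Q2 z) + c⁻¹ * (‖z‖ ^ 2 * Q1 z), ?_, ?_⟩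
    · refine HomN.add (HomN.const_mul ?_ _) (HomN.const_mul ?_ _)
      · have := (HomN.inner a).mul h2
        rwa [show 1 + (m + 1) = m + 2 by ring] at this
      · have := HomN.normSq.mul h1
        rwa [show 2 + m = m + 2 by ring] at this
    · intro u hu
      beta_reduce
      rw [e1 u hu, e2 u hu, hu]
      have s := hsum (inner ℝ a u)
      have p := hprod (inner ℝ a u)
      set x := (rho c (inner ℝ a u))⁻¹
      set y := (rho c (-inner ℝ a u))⁻¹
      have s' : -2 / c * inner ℝ a u = x - y := by rw [s]; ring
      rw [← mul_assoc, s', ← p]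
      ring

lemma integral_Ico_zpow (m : ℕ) {ε ρ : ℝ} (hε : 0 < ε) (h : ε ≤ ρ) :
    ∫ r in Ico ε ρ, r ^ (-1 - (m : ℤ)) =
      if m = 0 then Real.log ρ - Real.log ε else ((ε⁻¹) ^ m - (ρ⁻¹) ^ m) / m := by
  have hρ : 0 < ρ := hε.trans_le h
  rw [integral_Ico_eq_integral_Ioc, ← intervalIntegral.integral_of_le h]
  split_ifs with hm
  · subst hm
    simp only [Nat.cast_zero, sub_zero, zpow_neg_one]
    rw [integral_inv_of_pos hε hρ, Real.log_div hρ.ne' hε.ne']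
  · rw [integral_zpow]
    · have hm' : (m : ℝ) ≠ 0 := by exact_mod_cast hm
      have e : (-1 - (m : ℤ) + 1) = - (m : ℤ) := by ring
      rw [e]
      simp only [zpow_neg, zpow_natCast, inv_pow]
      push_cast
      have : (-1 - (m : ℝ) + 1) = - m := by ring
      rw [this, div_neg, ← neg_div]; congr 1; ring
    · right
      refine ⟨by omega, ?_⟩
      rw [uIcc_of_le h]
      intro h0; exact absurd h0.1 (not_le.2 hε)

lemma exists_B (a : E) {c ε : ℝ} (hc : 0 < c) (hε : 0 < ε) (m : ℕ)  :
    ∃ B : E → ℝ, HomN m B ∧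
    ∀ u : E, ‖u‖ = 1 → ε ≤ rho c (inner ℝ a u) → ε ≤ rho c (-inner ℝ a u) → B u =
      (∫ r in Ico ε (rho c (inner ℝ a u)), r ^ (-1 - (m : ℤ))) +
        (-1) ^ m * ∫ r in Ico ε (rho c (-inner ℝ a u)), r ^ (-1 - (m : ℤ)) := by
  rcases Nat.eq_zero_or_pos m with rfl | hm
  · refine ⟨fun _ => Real.log c - 2 * Real.log ε, HomN.const _, fun u hu h1 h2 => ?_⟩
    rw [integral_Ico_zpow 0 hε h1, integral_Ico_zpow 0 hε h2]
    simp only [if_true, pow_zero, one_mul]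
    have := Real.log_mul (rho_pos hc (inner ℝ a u)).ne' (rho_pos hc (-inner ℝ a u)).ne'
    rw [rho_mul hc] at this
    rw [this]; ring
  · obtain ⟨Q, hQ, eQ⟩ := exists_Q a hc m
    have hS : ∃ S : E → ℝ, HomN m S ∧ ∀ u : E, ‖u‖ = 1 → S u = 1 + (-1) ^ m := by
      rcases Nat.even_or_odd m with he | ho
      · obtain ⟨i, hi⟩ := he
        refine ⟨fun z => 2 * (‖z‖ ^ 2) ^ i, ⟨?_, ?_⟩, ?_⟩
        · exact contDiff_const.mul ((contDiff_norm_sq ℝ).pow i)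
        · intro t z
          beta_reduce
          rw [norm_smul, hi]
          simp only [mul_pow, Real.norm_eq_abs, sq_abs]
          ring
        · intro u hu
          beta_reduce
          rw [hu, hi, ← two_mul, pow_mul]; norm_num
      · exact ⟨fun _ => 0, ⟨contDiff_const, fun t z => by simp⟩, fun u _ => by
          rw [ho.neg_one_pow]; ring⟩
    obtain ⟨S, hS, eS⟩ := hS
    refine ⟨fun z => ((ε⁻¹) ^ m / m) * S z + (-1 / m) * Q z,
      (hS.const_mul _).add (hQ.const_mul _), fun u hu h1 h2 => ?_⟩
    beta_reduce
    rw [integral_Ico_zpow m hε h1, integral_Ico_zpow m hε h2, if_neg hm.ne', if_neg hm.ne', eQ u hu,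
      eS u hu, neg_pow ((rho c (-inner ℝ a u))⁻¹) m]
    ring

lemma ball_zero (hΓ : ∀ z ≠ 0, ContDiffAt ℝ ∞ Γ z)
    (hΓh : ∀ s : ℝ, s ≠ 0 → ∀ z, Γ (s • z) = |s| ^ (2 - (finrank ℝ E : ℤ)) * Γ z)
    (l j : ℕ) (hj : j ≤ l) (m : Fin (l + 2) → E) (p : E → ℝ) (hp : HomN j p)
    (a : E) (R ε : ℝ) (ha : ‖a‖ < R) (hε : 0 < ε) (hεR : ε + ‖a‖ < R) :
    IntegrableOn (fun z => iteratedFDeriv ℝ (l + 2) Γ z m * p z) (ball a R \ ball 0 ε) ∧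
    ∫ z in ball a R \ ball 0 ε, iteratedFDeriv ℝ (l + 2) Γ z m * p z = 0 := by
  set D : Set E := ball a R \ ball 0 ε with hD
  have hDm : MeasurableSet D := measurableSet_ball.diff measurableSet_ball
  have hN : 0 < finrank ℝ E := finrank_pos
  set g : E → ℝ := fun z => iteratedFDeriv ℝ (l + 2) Γ z m * p z with hg
  have hgs : ∀ z ≠ 0, ContDiffAt ℝ ∞ g z := fun z hz =>
    (K_smooth hΓ _ _ z hz).mul hp.1.contDiffAt
  have hint : IntegrableOn g D := by
    have hcomp : IsCompact (closedBall a R \ ball (0 : E) ε) :=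
      (isCompact_closedBall a R).diff isOpen_ball
    refine (ContinuousOn.integrableOn_compact hcomp ?_).mono_set
      (sdiff_subset_sdiff_left ball_subset_closedBall)
    intro z hz
    refine (hgs z ?_).continuousAt.continuousWithinAt
    rintro rfl
    exact hz.2 (mem_ball_self hε)
  refine ⟨hint, ?_⟩
  set F : E → ℝ := D.indicator g with hF
  have hFi : Integrable F := (integrable_indicator_iff hDm).2 hint
  have hFi' : Integrable (fun z => F (-z)) := hFi.comp_neg
  rw [← integral_indicator hDm]
  change ∫ z, F z = 0
  have hsymm : ∫ z, (F z + F (-z)) = 2 * ∫ z, F z := by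
    rw [integral_add hFi hFi', integral_neg_eq_self]; ring
  rw [polar_integral (fun z => F z + F (-z)) (hFi.add hFi')] at hsymm
  set c := R ^ 2 - ‖a‖ ^ 2 with hc
  have hcpos : 0 < c := by have := norm_nonneg a; nlinarith
  obtain ⟨B, hB, eB⟩ := exists_B a hcpos hε (l - j)
  have hρ : ∀ u : E, ‖u‖ = 1 → ε < rho c (inner ℝ a u) := by
    intro u hu
    rw [← mem_ball_iff_rho a u R ε ha hu hε, mem_ball, dist_eq_norm]
    refine (norm_sub_le _ _).trans_lt ?_
    rwa [norm_smul, hu, Real.norm_of_nonneg hε.le, mul_one]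
  have hpt : ∀ u : E, ‖u‖ = 1 → EqOn (fun r : ℝ => r ^ (finrank ℝ E - 1) * F (r • u))
      ((Ico ε (rho c (inner ℝ a u))).indicator
        (fun r => r ^ (-1 - ((l - j : ℕ) : ℤ)) * g u)) (Ioi 0) := by
    intro u hu r hr
    have hr : 0 < r := hr
    have hu0 : u ≠ 0 := by rintro rfl; simp at hu
    have hmem : r • u ∈ D ↔ r ∈ Ico ε (rho c (inner ℝ a u)) := by
      rw [hD, Set.mem_sdiff, mem_ball_iff_rho a u R r ha hu hr, mem_ball_zero_iff, norm_smul, hu,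
        Real.norm_of_nonneg hr.le, mul_one, not_lt, mem_Ico, and_comm]
    beta_reduce
    by_cases h : r ∈ Ico ε (rho c (inner ℝ a u))
    · rw [indicator_of_mem h, hF, indicator_of_mem (hmem.2 h), hg]
      beta_reduce
      rw [K_pos_hom hΓ hΓh _ _ r hr u hu0, hp.2]
      have : r ^ (-1 - ((l - j : ℕ) : ℤ)) = r ^ (finrank ℝ E - 1) *
          r ^ (2 - (finrank ℝ E : ℤ) - ((l + 2 : ℕ) : ℤ)) * r ^ j := by
        rw [← zpow_natCast, ← zpow_natCast, ← zpow_add₀ hr.ne', ← zpow_add₀ hr.ne']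
        congr 1; omega
      rw [this]; ring
    · rw [indicator_of_notMem h, hF, indicator_of_notMem (fun h' => h (hmem.1 h')), mul_zero]
  have hzi : ∀ u : E, ‖u‖ = 1 → IntegrableOn
      ((Ico ε (rho c (inner ℝ a u))).indicator
        (fun r => r ^ (-1 - ((l - j : ℕ) : ℤ)) * g u)) (Ioi 0) := by
    intro u hu
    refine Integrable.integrableOn ?_
    rw [integrable_indicator_iff measurableSet_Ico]
    refine Integrable.mul_const ?_ _
    refine (ContinuousOn.integrableOn_Icc ?_).mono_set Ico_subset_Icc_self
    intro r hr
    have : 0 < r := hε.trans_le hr.1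
    exact (continuousAt_zpow₀ r _ (Or.inl this.ne')).continuousWithinAt
  have hii : ∀ u : E, ‖u‖ = 1 →
      IntegrableOn (fun r : ℝ => r ^ (finrank ℝ E - 1) * F (r • u)) (Ioi 0) := fun u hu =>
    (integrableOn_congr_fun (hpt u hu) measurableSet_Ioi).2 (hzi u hu)
  have hin : ∀ u : E, ‖u‖ = 1 → ∫ r in Ioi (0 : ℝ), r ^ (finrank ℝ E - 1) * F (r • u) =
      (∫ r in Ico ε (rho c (inner ℝ a u)), r ^ (-1 - ((l - j : ℕ) : ℤ))) * g u := by
    intro u hu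
    rw [setIntegral_congr_fun measurableSet_Ioi (hpt u hu),
      setIntegral_indicator measurableSet_Ico, inter_eq_right.2, integral_mul_const]
    intro r hr
    exact hε.trans_le hr.1
  have hinner : ∀ θ : sphere (0 : E) 1, ∫ r in Ioi (0 : ℝ), r ^ (finrank ℝ E - 1) *
      (F (r • (θ : E)) + F (-(r • (θ : E)))) =
      iteratedFDeriv ℝ (l + 2) Γ θ m * (p θ * B θ) := by
    intro θ
    have hu : ‖(θ : E)‖ = 1 := by simp
    have hu' : ‖-(θ : E)‖ = 1 := by simp
    have h1 := hρ _ hu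
    have h2 := hρ _ hu'
    have e2 := hin _ hu'
    rw [inner_neg_right] at h2 e2
    have hgn : g (-(θ : E)) = (-1) ^ (l - j) * g θ := by
      rw [hg]; beta_reduce
      have := hp.2 (-1) (θ : E)
      rw [neg_smul, one_smul] at this
      rw [K_neg hΓ hΓh _ _ _ (sphere_ne_zero θ), this]
      have : ((-1 : ℝ)) ^ (l - j) = (-1) ^ (l + 2) * (-1) ^ j := by
        rw [← pow_add, show l + 2 + j = (l - j) + 2 * (j + 1) by omega, pow_add, pow_mul]
        simp
      rw [this]; ring
    have : ∀ r : ℝ, r ^ (finrank ℝ E - 1) * (F (r • (θ : E)) + F (-(r • (θ : E)))) =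
        r ^ (finrank ℝ E - 1) * F (r • (θ : E)) + r ^ (finrank ℝ E - 1) * F (r • (-(θ : E))) := by
      intro r
      rw [smul_neg]; ring
    simp only [this]
    rw [integral_add (hii _ hu) (hii _ hu'), hin _ hu, e2, hgn, eB _ hu h1.le h2.le, hg]
    ring
  simp only [hinner] at hsymm
  have horth := sphere_orth hΓ hΓh l m (fun z => p z * B z) (by
    have := hp.mul hB
    rwa [Nat.add_sub_cancel' hj] at this)
  rw [horth] at hsymm
  linarith

lemma iteratedDeriv_line (f : E → ℝ) (hf : ContDiff ℝ ∞ f) (x z : E) (i : ℕ) (t : ℝ) :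
    iteratedDeriv i (fun s : ℝ => f (x + s • z)) t =
      iteratedFDeriv ℝ i f (x + t • z) (fun _ => z) := by
  induction i generalizing t with
  | zero => simp
  | succ i ih =>
    rw [iteratedDeriv_succ, funext ih]
    have h1 : HasFDerivAt (iteratedFDeriv ℝ i f) (fderiv ℝ (iteratedFDeriv ℝ i f) (x + t • z))
        (x + t • z) :=
      (hf.differentiable_iteratedFDeriv (by exact_mod_cast ENat.coe_lt_top i) _).hasFDerivAt
    have h3 := ((ContinuousMultilinearMap.apply ℝ (fun _ : Fin i => E) ℝ
      (fun _ => z)).hasFDerivAt (x := iteratedFDeriv ℝ i f (x + t • z))).comp _ h1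
    have h4 : HasDerivAt (fun s : ℝ => x + s • z) z t := by
      simpa using ((hasDerivAt_id t).smul_const z).const_add x
    have h5 := (h3.comp_hasDerivAt t h4).deriv
    rw [iteratedFDeriv_succ_apply_left]
    exact h5

lemma taylor_bound (f : E → ℝ) (hf : ContDiff ℝ ∞ f) (hfc : HasCompactSupport f) (x : E) (l : ℕ) :
    ∃ C : ℝ, ∀ y, |f y - ∑ i ∈ Finset.range (l + 1), ((Nat.factorial i : ℝ)⁻¹) *
      iteratedFDeriv ℝ i f x (fun _ => y - x)| ≤ C * ‖y - x‖ ^ (l + 1) := by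
  obtain ⟨C, hC⟩ := (hfc.iteratedFDeriv (𝕜 := ℝ) (l + 1)).exists_bound_of_continuous
    (hf.continuous_iteratedFDeriv (m := l + 1) (by exact_mod_cast le_top))
  refine ⟨C / Nat.factorial l, fun y => ?_⟩
  set z := y - x with hz
  have hg : ContDiff ℝ ∞ (fun s : ℝ => f (x + s • z)) := by fun_prop
  have hw : ∀ i : ℕ, ∀ t ∈ Icc (0 : ℝ) 1,
      iteratedDerivWithin i (fun s : ℝ => f (x + s • z)) (Icc 0 1) t =
      iteratedFDeriv ℝ i f (x + t • z) (fun _ => z) := by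
    intro i t ht
    rw [iteratedDerivWithin_eq_iteratedDeriv (uniqueDiffOn_Icc one_pos)
      (hg.contDiffAt.of_le (by exact_mod_cast le_top)) ht, iteratedDeriv_line f hf]
  have := taylor_mean_remainder_bound (f := fun s : ℝ => f (x + s • z)) (a := 0) (b := 1) (x := 1)
    (n := l) (C := C * ‖z‖ ^ (l + 1)) zero_le_one (hg.contDiffOn.of_le (by exact_mod_cast le_top))
    (by simp) (by
      intro t ht
      rw [hw _ t ht]
      refine (ContinuousMultilinearMap.le_opNorm _ _).trans ?_
      simp only [Finset.prod_const, Finset.card_univ, Fintype.card_fin]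
      gcongr
      exact hC _)
  rw [taylor_within_apply] at this
  simp only [hw _ 0 (by simp), sub_zero, one_pow, mul_one, smul_eq_mul, zero_smul, add_zero,
    one_smul, Real.norm_eq_abs] at this
  rw [show x + z = y by simp [hz]] at this
  rw [div_mul_eq_mul_div]
  exact this

lemma K_bound (hΓ : ∀ z ≠ 0, ContDiffAt ℝ ∞ Γ z)
    (hΓh : ∀ s : ℝ, s ≠ 0 → ∀ z, Γ (s • z) = |s| ^ (2 - (finrank ℝ E : ℤ)) * Γ z)
    (k : ℕ) (m : Fin k → E) : ∃ C : ℝ, 0 ≤ C ∧ ∀ z ≠ 0,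
      |iteratedFDeriv ℝ k Γ z m| ≤ C * ‖z‖ ^ (2 - (finrank ℝ E : ℤ) - k) := by
  obtain ⟨C, hC⟩ := (isCompact_sphere (0 : E) 1).exists_bound_of_continuousOn
    (f := fun z => iteratedFDeriv ℝ k Γ z m) (fun z hz =>
      (K_smooth hΓ k m z (sphere_ne_zero ⟨z, hz⟩)).continuousAt.continuousWithinAt)
  refine ⟨max C 0, le_max_right _ _, fun z hz => ?_⟩
  have hn : 0 < ‖z‖ := norm_pos_iff.2 hz
  have hu : ‖‖z‖⁻¹ • z‖ = 1 := by rw [norm_smul]; simp [hn.ne']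
  have hzz : ‖z‖ • (‖z‖⁻¹ • z) = z := by rw [smul_smul, mul_inv_cancel₀ hn.ne', one_smul]
  have h := K_pos_hom hΓ hΓh k m ‖z‖ hn (‖z‖⁻¹ • z) (smul_ne_zero (inv_ne_zero hn.ne') hz)
  rw [hzz] at h
  rw [h, abs_mul, abs_of_pos (zpow_pos hn _), mul_comm]
  gcongr
  exact (hC _ (by simpa using hu)).trans (le_max_left _ _)

lemma main_gen (hΓ : ∀ z ≠ 0, ContDiffAt ℝ ∞ Γ z)
    (hΓh : ∀ s : ℝ, s ≠ 0 → ∀ z, Γ (s • z) = |s| ^ (2 - (finrank ℝ E : ℤ)) * Γ z)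
    (l : ℕ) (m : Fin (l + 2) → E) (f : E → ℝ) (hf : ContDiff ℝ ∞ f) (hfc : HasCompactSupport f)
    (R : ℝ) (hsupp : tsupport f ⊆ ball (0 : E) R) (x : E) :
    Tendsto (fun ε : ℝ => ∫ y in (ball x ε)ᶜ, iteratedFDeriv ℝ (l + 2) Γ (x - y) m * f y)
      (𝓝[>] 0)
      (𝓝 (∫ y in ball (0 : E) R, iteratedFDeriv ℝ (l + 2) Γ (x - y) m *
        (f y - ∑ i ∈ Finset.range (l + 1), ((Nat.factorial i : ℝ)⁻¹) *
          iteratedFDeriv ℝ i f x (fun _ => y - x)))) := by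
  have hN : 0 < finrank ℝ E := finrank_pos
  have hf0 : ∀ y, y ∉ ball (0 : E) R → f y = 0 := fun y hy =>
    image_eq_zero_of_notMem_tsupport (fun h => hy (hsupp h))
  set T : E → ℝ := fun y => ∑ i ∈ Finset.range (l + 1), ((Nat.factorial i : ℝ)⁻¹) *
          iteratedFDeriv ℝ i f x (fun _ => y - x) with hT
  change Tendsto _ _ (𝓝 (∫ y in ball (0 : E) R, iteratedFDeriv ℝ (l + 2) Γ (x - y) m *
        (f y - T y)))
  by_cases hx : x ∈ ball (0 : E) R
  swap
  · have hxt : x ∉ tsupport f := fun h => hx (hsupp h)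
    have hT0 : ∀ y, T y = 0 := by
      intro y
      rw [hT]; beta_reduce
      refine Finset.sum_eq_zero fun i _ => ?_
      have : iteratedFDeriv ℝ i f x = 0 :=
        image_eq_zero_of_notMem_tsupport (fun h => hxt (tsupport_iteratedFDeriv_subset i h))
      rw [this]; simp
    simp only [hT0, sub_zero]
    refine tendsto_const_nhds.congr' ?_
    obtain ⟨δ, hδ, hb⟩ := Metric.isOpen_iff.1 (isClosed_tsupport f).isOpen_compl x hxt
    filter_upwards [Ioo_mem_nhdsGT hδ] with ε hε
    rw [setIntegral_eq_integral_of_forall_compl_eq_zero (fun y hy => by rw [hf0 y hy, mul_zero]),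
      setIntegral_eq_integral_of_forall_compl_eq_zero]
    intro y hy
    simp only [mem_compl_iff, not_not] at hy
    rw [image_eq_zero_of_notMem_tsupport (hb (ball_subset_ball hε.2.le hy)), mul_zero]
  · -- the main case
    have hxR : ‖x‖ < R := by simpa using hx
    obtain ⟨C1, hC1⟩ := taylor_bound f hf hfc x l
    obtain ⟨C2, hC20, hC2⟩ := K_bound hΓ hΓh (l + 2) m
    have hTc : ContDiff ℝ ∞ T := by
      rw [hT]
      refine ContDiff.sum fun i _ => contDiff_const.mul ?_
      exact (iteratedFDeriv ℝ i f x).contDiff.comp (contDiff_pi.2 fun _ => by fun_prop)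
    -- integrability of the regularized kernel
    have hmp := Measure.measurePreserving_sub_left (volume : Measure E) x
    have hme : MeasurableEmbedding (fun y : E => x - y) :=
      (MeasurableEquiv.subLeft x).measurableEmbedding
    set h : E → ℝ := fun y => iteratedFDeriv ℝ (l + 2) Γ (x - y) m * (f y - T y) with hh
    have hH : LocallyIntegrable (fun z => iteratedFDeriv ℝ (l + 2) Γ z m *
        (f (x - z) - T (x - z))) (volume : Measure E) := by
      refine locallyIntegrable_of_norm_le_rpow (C := C2 * C1) (α := (finrank ℝ E : ℝ) - 1) hN
        (by linarith) ?_ ?_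
      · have : ∀ᵐ z : E, z ≠ 0 := by simp [ae_iff]
        filter_upwards [this] with z hz
        have hn : 0 < ‖z‖ := norm_pos_iff.2 hz
        have h1 := hC1 (x - z)
        rw [show x - z - x = -z by abel, norm_neg] at h1
        rw [norm_mul, Real.norm_eq_abs, Real.norm_eq_abs]
        have h2 : |f (x - z) - T (x - z)| ≤ C1 * ‖z‖ ^ (l + 1) := by
          rw [hT]; simpa [show x - z - x = -z by abel] using h1
        refine (mul_le_mul (hC2 z hz) h2 (abs_nonneg _) (by positivity)).trans_eq ?_
        have : ‖z‖ ^ (-((finrank ℝ E : ℝ) - 1)) =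
            ‖z‖ ^ (2 - (finrank ℝ E : ℤ) - ((l + 2 : ℕ) : ℤ)) * ‖z‖ ^ (l + 1) := by
          rw [← zpow_natCast, ← zpow_add₀ hn.ne', ← Real.rpow_intCast]
          congr 1; push_cast; ring
        rw [this]; ring
      · have : (volume : Measure E) = volume.restrict {0}ᶜ := by rw [restrict_compl_singleton]
        rw [this]
        refine ContinuousOn.aestronglyMeasurable ?_ (measurableSet_singleton _).compl
        intro z hz
        refine ContinuousAt.continuousWithinAt ?_
        refine (K_smooth hΓ _ _ z hz).continuousAt.mul ?_
        have h1 := hf.continuous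
        have h2 := hTc.continuous
        fun_prop
    have hpre : ∀ ε : ℝ, (fun y : E => x - y) ⁻¹' (ball x R \ ball 0 ε) =
        ball 0 R \ ball x ε := by
      intro ε
      ext y
      simp [dist_eq_norm, norm_sub_rev]
    have hint : IntegrableOn h (ball 0 R) := by
      have h1 : IntegrableOn (fun z => iteratedFDeriv ℝ (l + 2) Γ z m *
          (f (x - z) - T (x - z))) (ball x R) :=
        (hH.integrableOn_isCompact (isCompact_closedBall x R)).mono_set ball_subset_closedBall
      have h2 := (hmp.integrableOn_comp_preimage hme).2 h1
      have h3 : (fun y : E => x - y) ⁻¹' (ball x R) = ball 0 R := by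
        ext y
        simp [dist_eq_norm]
      rw [h3] at h2
      refine h2.congr_fun ?_ measurableSet_ball
      intro y _
      simp [hh]
    -- polynomial terms
    have hpoly : ∀ ε : ℝ, 0 < ε → ε < R - ‖x‖ →
        IntegrableOn (fun y => iteratedFDeriv ℝ (l + 2) Γ (x - y) m * T y) (ball 0 R \ ball x ε) ∧
        ∫ y in ball 0 R \ ball x ε, iteratedFDeriv ℝ (l + 2) Γ (x - y) m * T y = 0 := by
      intro ε hε hεR
      have hterm : ∀ i ∈ Finset.range (l + 1), IntegrableOn (fun y =>
          iteratedFDeriv ℝ (l + 2) Γ (x - y) m * (((Nat.factorial i : ℝ)⁻¹) *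
          iteratedFDeriv ℝ i f x (fun _ => y - x))) (ball 0 R \ ball x ε) ∧
          ∫ y in ball 0 R \ ball x ε, iteratedFDeriv ℝ (l + 2) Γ (x - y) m *
            (((Nat.factorial i : ℝ)⁻¹) * iteratedFDeriv ℝ i f x (fun _ => y - x)) = 0 := by
        intro i hi
        have hi' : i ≤ l := by simpa [Nat.lt_succ_iff] using hi
        have hp : HomN i (fun z : E => iteratedFDeriv ℝ i f x (fun _ => z)) := by
          refine ⟨(iteratedFDeriv ℝ i f x).contDiff.comp (contDiff_pi.2 fun _ => contDiff_id), ?_⟩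
          intro t z
          have := (iteratedFDeriv ℝ i f x).map_smul_univ (fun _ => t) (fun _ => z)
          simpa using this
        have hb := ball_zero hΓ hΓh l i hi' m _ (hp.comp_neg.const_mul ((Nat.factorial i : ℝ)⁻¹))
          x R ε hxR hε (by linarith)
        rw [← hpre ε]
        have e1 : (fun y => iteratedFDeriv ℝ (l + 2) Γ (x - y) m * (((Nat.factorial i : ℝ)⁻¹) *
          iteratedFDeriv ℝ i f x (fun _ => y - x))) = (fun z => iteratedFDeriv ℝ (l + 2) Γ z m *
            (((Nat.factorial i : ℝ)⁻¹) * iteratedFDeriv ℝ i f x (fun _ => -z))) ∘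
            (fun y => x - y) := by
          ext y
          simp
        refine ⟨?_, ?_⟩
        · rw [e1]
          exact (hmp.integrableOn_comp_preimage hme).2 hb.1
        · rw [e1]
          exact (hmp.setIntegral_preimage_emb hme _ _).trans hb.2
      have e2 : (fun y => iteratedFDeriv ℝ (l + 2) Γ (x - y) m * T y) = fun y =>
          ∑ i ∈ Finset.range (l + 1), iteratedFDeriv ℝ (l + 2) Γ (x - y) m *
          (((Nat.factorial i : ℝ)⁻¹) * iteratedFDeriv ℝ i f x (fun _ => y - x)) := by
        ext y
        rw [hT, Finset.mul_sum]
      rw [e2]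
      refine ⟨integrable_finset_sum _ fun i hi => (hterm i hi).1, ?_⟩
      rw [integral_finset_sum _ fun i hi => (hterm i hi).1]
      exact Finset.sum_eq_zero fun i hi => (hterm i hi).2
    have hlim : Tendsto (fun ε : ℝ => ∫ y in ball (0 : E) R, (ball x ε)ᶜ.indicator h y)
        (𝓝[>] 0) (𝓝 (∫ y in ball (0 : E) R, h y)) := by
      refine tendsto_integral_filter_of_dominated_convergence (fun y => ‖h y‖) ?_ ?_ hint.norm ?_
      · exact Eventually.of_forall fun ε =>
          hint.aestronglyMeasurable.indicator measurableSet_ball.compl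
      · exact Eventually.of_forall fun ε => Eventually.of_forall fun y =>
          norm_indicator_le_norm_self _ _
      · have : ∀ᵐ y ∂(volume.restrict (ball (0 : E) R)), y ≠ x :=
          ae_restrict_of_ae (by simp [ae_iff])
        filter_upwards [this] with y hy
        refine tendsto_const_nhds.congr' ?_
        filter_upwards [Ioo_mem_nhdsGT (dist_pos.2 hy)] with ε hε
        rw [indicator_of_mem]
        simpa using hε.2.le
    refine hlim.congr' ?_
    filter_upwards [Ioo_mem_nhdsGT (sub_pos.2 hxR)] with ε hε
    obtain ⟨hpi, hp0⟩ := hpoly ε hε.1 hε.2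
    rw [setIntegral_indicator measurableSet_ball.compl]
    have hDe : ball (0 : E) R ∩ (ball x ε)ᶜ = ball 0 R \ ball x ε := rfl
    rw [hDe]
    have hsub : ball (0 : E) R \ ball x ε ⊆ (ball x ε)ᶜ := fun y hy => hy.2
    rw [setIntegral_eq_of_subset_of_forall_sdiff_eq_zero measurableSet_ball.compl hsub
      (fun y hy => by
        rw [hf0 y (fun h => hy.2 ⟨h, hy.1⟩), mul_zero])]
    have e3 : ∀ y, iteratedFDeriv ℝ (l + 2) Γ (x - y) m * f y =
        h y + iteratedFDeriv ℝ (l + 2) Γ (x - y) m * T y := by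
      intro y; rw [hh]; ring
    simp only [e3]
    rw [integral_add (hint.mono_set sdiff_subset) hpi, hp0, add_zero]

end kernel
end aux

theorem stmt_3 (n k : ℕ) (hn : 3 ≤ n) (hk : 2 ≤ k) (v : Fin k → Fin n)
    (f : EuclideanSpace ℝ (Fin n) → ℝ) (hf : ContDiff ℝ (⊤ : ℕ∞) f)
    (hfc : HasCompactSupport f) (R : ℝ) (hR : 0 < R)
    (hsupp : tsupport f ⊆ ball (0 : EuclideanSpace ℝ (Fin n)) R)
    (x : EuclideanSpace ℝ (Fin n)) :
    Filter.Tendsto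
      (fun ε : ℝ => ∫ y in (ball x ε)ᶜ,
        (iteratedFDeriv ℝ k (fun w => fundSol n (w - y)) x fun i => ee (v i)) * f y)
      (nhdsWithin 0 (Set.Ioi 0))
      (nhds (∫ y in ball (0 : EuclideanSpace ℝ (Fin n)) R,
        (iteratedFDeriv ℝ k (fun w => fundSol n (w - y)) x fun i => ee (v i)) *
          (f y - taylorPoly n (k - 2) f x y))) := by
  obtain ⟨l, rfl⟩ : ∃ l, k = l + 2 := ⟨k - 2, by omega⟩
  haveI : Nontrivial (EuclideanSpace ℝ (Fin n)) := by
    apply Module.nontrivial_of_finrank_pos (R := ℝ)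
    rw [finrank_euclideanSpace_fin]; omega
  simp only [iteratedFDeriv_comp_sub, Nat.add_sub_cancel, taylorPoly]
  refine main_gen (Γ := fundSol n) ?_ ?_ l (fun i => ee (v i)) f hf hfc R hsupp x
  · intro z hz
    unfold fundSol
    refine contDiffAt_const.mul ?_
    exact (contDiffAt_norm ℝ hz).rpow_const_of_ne (norm_ne_zero_iff.2 hz)
  · intro s hs z
    unfold fundSol
    rw [finrank_euclideanSpace_fin, norm_smul, Real.mul_rpow (norm_nonneg _) (norm_nonneg _),
      Real.norm_eq_abs, ← Real.rpow_intCast]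
    push_cast
    ring
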